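/- Let X ∈ ℝ^{n×p}, c > 0, and suppose there exists a feasible v with ‖v‖₁ ≤ c, ‖v‖₂ ≤ 1 and Xv ≠ 0. Consider the problem of maximizing uᵀXv over u ∈ ℝⁿ, v ∈ ℝ^p subject to ‖v‖₁ ≤ c, ‖v‖₂ ≤ 1, ‖u‖₂ ≤ 1. Then (û, v̂) with Xv̂ ≠ 0 is a maximizer of this problem if and only if û = Xv̂/‖Xv̂‖₂ and v̂ is a maximizer of vᵀXᵀXv over {v ∈ ℝ^p : ‖v‖₁ ≤ c, ‖v‖₂ ≤ 1}. In particular, the optimal values satisfy max uᵀXv = max √(vᵀXᵀXv). -/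

import Mathlib

/-! For fixed `v` the inner problem over the unit ball is solved by Cauchy–Schwarz: `u ⬝ᵥ X v ≤ ‖X v‖₂`,
with equality exactly at `u = X v / ‖X v‖₂` when `X v ≠ 0` (`dotProduct_le_l2norm`,
`dotProduct_normalize`, `eq_normalize_of_le_dotProduct`). Profiling out `u` therefore leaves the
problem of maximizing `‖X v‖₂ = √(vᵀXᵀXv)`, which has the same maximizers as `vᵀXᵀXv` since the
square root is increasing. The two sets of attained values are mutually cofinal, so their suprema
agree. -/

open Matrix BigOperators

noncomputable def l2norm {n : Type*} [Fintype n] (v : n → ℝ) : ℝ :=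
  Real.sqrt (∑ i, v i ^ 2)

def l1norm {n : Type*} [Fintype n] (v : n → ℝ) : ℝ := ∑ i, |v i|

lemma l2norm_nonneg {n : Type*} [Fintype n] (w : n → ℝ) : 0 ≤ l2norm w :=
  Real.sqrt_nonneg _

lemma l2norm_eq_sqrt_dotProduct {n : Type*} [Fintype n] (w : n → ℝ) :
    l2norm w = Real.sqrt (w ⬝ᵥ w) := by
  simp only [l2norm, dotProduct, sq]

lemma l2norm_sq {n : Type*} [Fintype n] (w : n → ℝ) : l2norm w ^ 2 = w ⬝ᵥ w := by
  rw [l2norm, Real.sq_sqrt (Finset.sum_nonneg fun i _ => sq_nonneg (w i))]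
  simp only [dotProduct, sq]

lemma l2norm_pos {n : Type*} [Fintype n] {w : n → ℝ} (hw : w ≠ 0) : 0 < l2norm w := by
  refine lt_of_le_of_ne (l2norm_nonneg w) fun h => hw ?_
  rw [← dotProduct_self_eq_zero, ← l2norm_sq, ← h, zero_pow two_ne_zero]

/-- Cauchy–Schwarz for a vector `u` in the Euclidean unit ball. -/
lemma dotProduct_le_l2norm {n : Type*} [Fintype n] {u : n → ℝ} (hu : l2norm u ≤ 1)
    (w : n → ℝ) : u ⬝ᵥ w ≤ l2norm w :=
  (Real.sum_mul_le_sqrt_mul_sqrt Finset.univ u w).trans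
    (mul_le_of_le_one_left (l2norm_nonneg w) hu)

/-- For `w = 0` the left-hand side is `0⁻¹ • 0 = 0`, hence only an inequality. -/
lemma l2norm_normalize_le {n : Type*} [Fintype n] (w : n → ℝ) :
    l2norm ((l2norm w)⁻¹ • w) ≤ 1 := by
  rw [← sq_le_one_iff₀ (l2norm_nonneg _), l2norm_sq, smul_dotProduct, dotProduct_smul,
    ← l2norm_sq, smul_eq_mul, smul_eq_mul]
  rcases eq_or_ne (l2norm w) 0 with h | h
  · simp [h]
  · apply le_of_eq
    field_simp

lemma dotProduct_normalize {n : Type*} [Fintype n] (w : n → ℝ) :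
    ((l2norm w)⁻¹ • w) ⬝ᵥ w = l2norm w := by
  rw [smul_dotProduct, ← l2norm_sq, smul_eq_mul]
  rcases eq_or_ne (l2norm w) 0 with h | h
  · simp [h]
  · field_simp

/-- The equality case of Cauchy–Schwarz, from `‖u - w / ‖w‖‖² = ‖u‖² - 2 (u ⬝ᵥ w) / ‖w‖ + 1 ≤ 0`. -/
lemma eq_normalize_of_le_dotProduct {n : Type*} [Fintype n] {u w : n → ℝ} (hw : w ≠ 0)
    (hu : l2norm u ≤ 1) (h : l2norm w ≤ u ⬝ᵥ w) : u = (l2norm w)⁻¹ • w := by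
  have hpos := l2norm_pos hw
  have huu : u ⬝ᵥ u ≤ 1 := by
    rw [← l2norm_sq]
    exact pow_le_one₀ (l2norm_nonneg u) hu
  have h1 : 1 ≤ (l2norm w)⁻¹ * (u ⬝ᵥ w) := by
    rw [inv_mul_eq_div]
    exact (one_le_div hpos).2 h
  have hz := l2norm_normalize_le w
  rw [← sq_le_one_iff₀ (l2norm_nonneg _), l2norm_sq] at hz
  have key : (u - (l2norm w)⁻¹ • w) ⬝ᵥ (u - (l2norm w)⁻¹ • w) ≤ 0 := by
    have hexp : (u - (l2norm w)⁻¹ • w) ⬝ᵥ (u - (l2norm w)⁻¹ • w)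
        = u ⬝ᵥ u - 2 * ((l2norm w)⁻¹ * (u ⬝ᵥ w))
          + ((l2norm w)⁻¹ • w) ⬝ᵥ ((l2norm w)⁻¹ • w) := by
      rw [sub_dotProduct, dotProduct_sub, dotProduct_sub,
        dotProduct_comm ((l2norm w)⁻¹ • w) u, dotProduct_smul _ u w, smul_eq_mul]
      ring
    linarith
  rw [← l2norm_sq] at key
  have h0 : (u - (l2norm w)⁻¹ • w) ⬝ᵥ (u - (l2norm w)⁻¹ • w) = 0 := by
    rw [← l2norm_sq]
    exact le_antisymm key (sq_nonneg _)
  exact sub_eq_zero.1 (dotProduct_self_eq_zero.1 h0)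

lemma dotProduct_gram_mulVec {n p : ℕ} (X : Matrix (Fin n) (Fin p) ℝ) (v : Fin p → ℝ) :
    v ⬝ᵥ ((Xᵀ * X).mulVec v) = X.mulVec v ⬝ᵥ X.mulVec v := by
  rw [← mulVec_mulVec, dotProduct_mulVec, vecMul_transpose]

/-- Lemma 3: for the penalized matrix decomposition problem
`max uᵀXv` s.t. `‖v‖₁ ≤ c, ‖v‖₂ ≤ 1, ‖u‖₂ ≤ 1`, a pair `(û, v̂)` with `Xv̂ ≠ 0` is a
maximizer iff `û = Xv̂/‖Xv̂‖₂` and `v̂` maximizes `vᵀXᵀXv` s.t. `‖v‖₁ ≤ c, ‖v‖₂ ≤ 1`;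
moreover the optimal values satisfy `max uᵀXv = max √(vᵀXᵀXv)`. -/
theorem stmt_9 {n p : ℕ} (X : Matrix (Fin n) (Fin p) ℝ) (c : ℝ) (hc : 0 < c)
    (v₀ : Fin p → ℝ) (hv₀₁ : l1norm v₀ ≤ c) (hv₀₂ : l2norm v₀ ≤ 1) (hv₀X : X.mulVec v₀ ≠ 0)
    (uh : Fin n → ℝ) (vh : Fin p → ℝ) (hXvh : X.mulVec vh ≠ 0) :
    ((l2norm uh ≤ 1 ∧ l1norm vh ≤ c ∧ l2norm vh ≤ 1 ∧
        ∀ (u : Fin n → ℝ) (v : Fin p → ℝ), l2norm u ≤ 1 → l1norm v ≤ c → l2norm v ≤ 1 →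
          dotProduct u (X.mulVec v) ≤ dotProduct uh (X.mulVec vh)) ↔
      (uh = (l2norm (X.mulVec vh))⁻¹ • X.mulVec vh ∧
        l1norm vh ≤ c ∧ l2norm vh ≤ 1 ∧
        ∀ v : Fin p → ℝ, l1norm v ≤ c → l2norm v ≤ 1 →
          dotProduct v ((Xᵀ * X).mulVec v) ≤ dotProduct vh ((Xᵀ * X).mulVec vh))) ∧
    sSup {t : ℝ | ∃ (u : Fin n → ℝ) (v : Fin p → ℝ),
        l2norm u ≤ 1 ∧ l1norm v ≤ c ∧ l2norm v ≤ 1 ∧ t = dotProduct u (X.mulVec v)} =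
      sSup {t : ℝ | ∃ v : Fin p → ℝ,
        l1norm v ≤ c ∧ l2norm v ≤ 1 ∧ t = Real.sqrt (dotProduct v ((Xᵀ * X).mulVec v))} := by
  simp only [dotProduct_gram_mulVec, ← l2norm_eq_sqrt_dotProduct]
  simp only [← l2norm_sq]
  refine ⟨⟨?_, ?_⟩, ?_⟩
  · rintro ⟨hu, h1, h2, hmax⟩
    -- The pair `(X v / ‖X v‖, v)` is feasible, so the maximum dominates `‖X v‖` for feasible `v`.
    have hle : ∀ v : Fin p → ℝ, l1norm v ≤ c → l2norm v ≤ 1 →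
        l2norm (X.mulVec v) ≤ uh ⬝ᵥ X.mulVec vh := fun v hv1 hv2 => by
      simpa only [dotProduct_normalize] using hmax _ v (l2norm_normalize_le (X.mulVec v)) hv1 hv2
    exact ⟨eq_normalize_of_le_dotProduct hXvh hu (hle vh h1 h2), h1, h2, fun v hv1 hv2 =>
      pow_le_pow_left₀ (l2norm_nonneg _)
        ((hle v hv1 hv2).trans (dotProduct_le_l2norm hu _)) 2⟩
  · rintro ⟨rfl, h1, h2, hmax⟩
    refine ⟨l2norm_normalize_le _, h1, h2, fun u v hu hv1 hv2 => ?_⟩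
    rw [dotProduct_normalize]
    exact (dotProduct_le_l2norm hu _).trans
      ((sq_le_sq₀ (l2norm_nonneg _) (l2norm_nonneg _)).1 (hmax v hv1 hv2))
  · apply csSup_eq_csSup_of_forall_exists_le
    · rintro _ ⟨u, v, hu, hv1, hv2, rfl⟩
      exact ⟨_, ⟨v, hv1, hv2, rfl⟩, dotProduct_le_l2norm hu _⟩
    · rintro _ ⟨v, hv1, hv2, rfl⟩
      exact ⟨_, ⟨_, v, l2norm_normalize_le (X.mulVec v), hv1, hv2, rfl⟩,
        (dotProduct_normalize _).ge⟩
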